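/- (Measurable coupling transfer) Let X and Z be random variables on a probability space taking values in standard Borel (separable metric) spaces E₁ and E₂. Then there exists a jointly measurable function F : E₂ × [0,1] → E₁ such that if U is uniform on [0,1] and independent of Z, then the pair (F(Z,U), Z) has the same joint law as (X, Z). -/

import Mathlib

open MeasureTheory ProbabilityTheory

/-- A measure-level composition-product `ν ⊗ₘ κ` is the law of `(z, f z u)` under `ν.prod ρ`,
as soon as `f a` pushes `ρ` forward to `κ a` for every `a`. -/
theorem MeasureTheory.Measure.map_prod_eq_compProd {α β γ : Type*} [MeasurableSpace α]
    [MeasurableSpace β] [MeasurableSpace γ] (ν : Measure α) [SFinite ν] (ρ : Measure β) [SFinite ρ]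
    (κ : Kernel α γ) [IsSFiniteKernel κ] {f : α → β → γ} (hf : Measurable (Function.uncurry f))
    (hκ : ∀ a, ρ.map (f a) = κ a) :
    (ν.prod ρ).map (fun p => (p.1, f p.1 p.2)) = ν ⊗ₘ κ := by
  have hg : Measurable (fun p : α × β => (p.1, f p.1 p.2)) := measurable_fst.prodMk hf
  ext s hs
  rw [Measure.map_apply hg hs, Measure.prod_apply (hg hs), Measure.compProd_apply hs]
  refine lintegral_congr fun a => ?_
  rw [← hκ a, Measure.map_apply hf.of_uncurry_left (measurable_prodMk_left hs)]
  rfl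

/-- Clamping to `[0,1]` sends Lebesgue measure on `[0,1] ⊆ ℝ` to the volume of the unit interval. -/
theorem unitInterval.map_projIcc_volume_restrict :
    (volume.restrict (Set.Icc (0 : ℝ) 1)).map (Set.projIcc (0 : ℝ) 1 zero_le_one) =
      (volume : Measure unitInterval) := by
  have h : (volume : Measure unitInterval).map Subtype.val =
      volume.restrict (Set.Icc (0 : ℝ) 1) :=
    map_comap_subtype_coe measurableSet_Icc volume
  rw [← h, Measure.map_map continuous_projIcc.measurable measurable_subtype_coe]
  convert Measure.map_id
  ext1 x
  exact Set.projIcc_val zero_le_one x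

/-- Measurable coupling transfer: if `X, Z` are random variables with
values in standard Borel spaces `E₁, E₂`, there is a jointly measurable
`F : E₂ × [0,1] → E₁` such that whenever `U` is uniform on `[0,1]` and independent
of a copy `Z'` of `Z`, the pair `(F(Z',U), Z')` has the same joint law as `(X,Z)`. -/
theorem stmt6 {Ω E₁ E₂ : Type*} [MeasurableSpace Ω]
    [MeasurableSpace E₁] [StandardBorelSpace E₁]
    [MeasurableSpace E₂] [StandardBorelSpace E₂]
    (μ : Measure Ω) [IsProbabilityMeasure μ]
    (X : Ω → E₁) (Z : Ω → E₂) (hX : Measurable X) (hZ : Measurable Z) :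
    ∃ F : E₂ → ℝ → E₁, Measurable (fun p : E₂ × ℝ => F p.1 p.2) ∧
      ∀ (Ω' : Type) (_ : MeasurableSpace Ω') (μ' : Measure Ω'),
        IsProbabilityMeasure μ' →
        ∀ (Z' : Ω' → E₂) (U : Ω' → ℝ), Measurable Z' → Measurable U →
          μ'.map U = volume.restrict (Set.Icc (0 : ℝ) 1) →
          IndepFun Z' U μ' →
          μ'.map Z' = μ.map Z →
          μ'.map (fun ω => (F (Z' ω) (U ω), Z' ω)) =
            μ.map (fun ω => (X ω, Z ω)) := by
  have : Nonempty E₁ := (nonempty_of_isProbabilityMeasure μ).map X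
  obtain ⟨f, hf, hfκ⟩ := (condDistrib X Z μ).exists_measurable_map_eq_unitInterval
  have hproj : Measurable (Set.projIcc (0 : ℝ) 1 zero_le_one) := continuous_projIcc.measurable
  refine ⟨fun z u => f z (Set.projIcc 0 1 zero_le_one u),
    hf.comp (measurable_fst.prodMk (hproj.comp measurable_snd)), ?_⟩
  intro Ω' _ μ' _ Z' U hZ' hU hUlaw hind hZlaw
  have hV : Measurable (fun ω => Set.projIcc (0 : ℝ) 1 zero_le_one (U ω)) := hproj.comp hU
  have hVlaw : μ'.map (fun ω => Set.projIcc (0 : ℝ) 1 zero_le_one (U ω)) = volume := by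
    rw [← unitInterval.map_projIcc_volume_restrict, ← hUlaw, Measure.map_map hproj hU]
    rfl
  have hindV : IndepFun Z' (fun ω => Set.projIcc (0 : ℝ) 1 zero_le_one (U ω)) μ' :=
    hind.comp measurable_id hproj
  have hjoint := (indepFun_iff_map_prod_eq_prod_map_map hZ'.aemeasurable hV.aemeasurable).1 hindV
  rw [hZlaw, hVlaw] at hjoint
  have : IsProbabilityMeasure (μ.map Z) := Measure.isProbabilityMeasure_map hZ.aemeasurable
  have hg : Measurable (fun p : E₂ × unitInterval => (p.1, f p.1 p.2)) := measurable_fst.prodMk hf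
  have key := Measure.map_prod_eq_compProd (μ.map Z) volume (condDistrib X Z μ) hf hfκ
  rw [compProd_map_condDistrib hX.aemeasurable, ← hjoint,
    Measure.map_map hg (hZ'.prodMk hV)] at key
  have hswap := congrArg (Measure.map Prod.swap) key
  rwa [Measure.map_map measurable_swap (hg.comp (hZ'.prodMk hV)),
    Measure.map_map measurable_swap (hZ.prodMk hX)] at hswap
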